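/- arXiv:2410.23816 — 2 statements merged into one kernel-verified Lean document; each statement's English description precedes it below -/
import Mathlib

section
/- Let A ∈ ℝ^{n×n} be symmetric positive semidefinite and B, C ∈ ℝ^{n×n} symmetric positive definite. Then for every 1 ≤ k ≤ n: (1) λ_k(A,C)·λ_1(C,B) ≤ λ_k(A,B) ≤ λ_k(A,C)·λ_n(C,B), and (2) λ_1(A,C)·λ_k(C,B) ≤ λ_k(A,B) ≤ λ_n(A,C)·λ_k(C,B). -/
open Matrix

/-- The eigenvalues of a symmetric real matrix listed in ascending order with multiplicity. -/
noncomputable def sortedEigs {n : ℕ} (M : Matrix (Fin n) (Fin n) ℝ) : Fin n → ℝ :=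
  if h : M.IsHermitian then h.eigenvalues ∘ Tuple.sort h.eigenvalues else 0

-- The generalized eigenvalues `λ_1(A,B) ≤ … ≤ λ_n(A,B)`: the eigenvalues of
-- `B^{-1/2} A B^{-1/2}` in ascending order with multiplicity (`B` positive definite).
open Classical MatrixOrder in
noncomputable def genEigs {n : ℕ} (A B : Matrix (Fin n) (Fin n) ℝ) : Fin n → ℝ :=
  if hB : B.PosDef then sortedEigs ((CFC.sqrt B)⁻¹ * A * (CFC.sqrt B)⁻¹) else 0


theorem herm_quad {n : ℕ} {M : Matrix (Fin n) (Fin n) ℝ} (h : M.IsHermitian) :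
    ∃ g : (Fin n → ℝ) →ₗ[ℝ] (Fin n → ℝ), ∀ y,
      y ⬝ᵥ M *ᵥ y = ∑ i, h.eigenvalues i * (g y i) ^ 2 ∧ y ⬝ᵥ y = ∑ i, (g y i) ^ 2 := by
  set U : Matrix (Fin n) (Fin n) ℝ := (h.eigenvectorUnitary : Matrix (Fin n) (Fin n) ℝ) with hU
  have hUU : U * Uᵀ = 1 := by
    have := Unitary.coe_mul_star_self h.eigenvectorUnitary
    simpa [star_eq_conjTranspose] using this
  have hM : M = U * diagonal h.eigenvalues * Uᵀ := by
    have := h.spectral_theorem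
    rw [Unitary.conjStarAlgAut_apply] at this
    simpa [star_eq_conjTranspose, Function.comp_def] using this
  refine ⟨Uᵀ.mulVecLin, fun y => ⟨?_, ?_⟩⟩
  · have : y ⬝ᵥ M *ᵥ y = (Uᵀ *ᵥ y) ⬝ᵥ (diagonal h.eigenvalues *ᵥ (Uᵀ *ᵥ y)) := by
      conv_lhs => rw [hM]
      rw [mulVec_transpose, ← mulVec_mulVec, ← mulVec_mulVec, dotProduct_mulVec,
        mulVec_transpose]
    rw [this]
    simp only [dotProduct, mulVec_diagonal, mulVecLin_apply]
    exact Finset.sum_congr rfl fun i _ => by ring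
  · have : y ⬝ᵥ y = (Uᵀ *ᵥ y) ⬝ᵥ (Uᵀ *ᵥ y) := by
      conv_rhs => rw [dotProduct_mulVec, vecMul_transpose, mulVec_mulVec, hUU, one_mulVec]
    rw [this]
    simp only [dotProduct, mulVecLin_apply]
    exact Finset.sum_congr rfl fun i _ => by ring

open MatrixOrder in
theorem genEigs_spec {n : ℕ} {A B : Matrix (Fin n) (Fin n) ℝ} (hA : A.IsHermitian)
    (hB : B.PosDef) :
    Monotone (genEigs A B) ∧ ∃ f : (Fin n → ℝ) →ₗ[ℝ] (Fin n → ℝ), ∀ x,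
      x ⬝ᵥ A *ᵥ x = ∑ i, genEigs A B i * (f x i) ^ 2 ∧ x ⬝ᵥ B *ᵥ x = ∑ i, (f x i) ^ 2 := by
  have hSS : CFC.sqrt B * CFC.sqrt B = B :=
    CFC.sqrt_mul_sqrt_self B hB.posSemidef.nonneg
  have hSh : (CFC.sqrt B).IsHermitian :=
    (Matrix.nonneg_iff_posSemidef.mp (CFC.sqrt_nonneg B)).isHermitian
  have hdet : IsUnit (CFC.sqrt B).det := by
    have h1 := hB.det_pos.ne'
    rw [← hSS, det_mul] at h1
    exact isUnit_iff_ne_zero.mpr (left_ne_zero_of_mul h1)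
  have hG : genEigs A B = sortedEigs ((CFC.sqrt B)⁻¹ * A * (CFC.sqrt B)⁻¹) := by
    unfold genEigs
    rw [dif_pos hB]
  rw [hG]
  clear hG
  generalize CFC.sqrt B = S at *
  have hST : Sᵀ = S := by simpa [IsHermitian] using hSh
  have hM : (S⁻¹ * A * S⁻¹).IsHermitian := by
    have := isHermitian_conjTranspose_mul_mul (S⁻¹) hA
    rwa [hSh.inv.eq] at this
  have hAS : A = S * (S⁻¹ * A * S⁻¹) * S := by
    rw [← mul_assoc, ← mul_assoc, mul_nonsing_inv _ hdet, one_mul, mul_assoc,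
      nonsing_inv_mul _ hdet, mul_one]
  generalize S⁻¹ * A * S⁻¹ = M at *
  have hE : sortedEigs M = hM.eigenvalues ∘ Tuple.sort hM.eigenvalues := by
    unfold sortedEigs
    rw [dif_pos hM]
  rw [hE]
  refine ⟨Tuple.monotone_sort _, ?_⟩
  obtain ⟨g, hg⟩ := herm_quad hM
  refine ⟨(LinearMap.funLeft ℝ ℝ (Tuple.sort hM.eigenvalues)) ∘ₗ g ∘ₗ S.mulVecLin, fun x => ?_⟩
  obtain ⟨h1, h2⟩ := hg (S *ᵥ x)
  have key : ∀ v, x ⬝ᵥ (S *ᵥ v) = (S *ᵥ x) ⬝ᵥ v := fun v => by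
    rw [dotProduct_mulVec, ← mulVec_transpose, hST]
  constructor
  · rw [hAS, ← mulVec_mulVec, ← mulVec_mulVec, key, h1]
    exact (Equiv.sum_comp (Tuple.sort hM.eigenvalues)
      (fun i => hM.eigenvalues i * (g (S *ᵥ x) i) ^ 2)).symm
  · rw [← hSS, ← mulVec_mulVec, key, h2]
    exact (Equiv.sum_comp (Tuple.sort hM.eigenvalues) (fun i => (g (S *ᵥ x) i) ^ 2)).symm

theorem sum_upper {n : ℕ} {l c : Fin n → ℝ} (hl : Monotone l) (k : Fin n)
    (hc : ∀ i, k < i → c i = 0) : ∑ i, l i * (c i) ^ 2 ≤ l k * ∑ i, (c i) ^ 2 := by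
  rw [Finset.mul_sum]
  refine Finset.sum_le_sum fun i _ => ?_
  rcases lt_or_ge k i with h | h
  · simp [hc i h]
  · exact mul_le_mul_of_nonneg_right (hl h) (sq_nonneg _)

theorem sum_lower {n : ℕ} {l c : Fin n → ℝ} (hl : Monotone l) (k : Fin n)
    (hc : ∀ i, i < k → c i = 0) : l k * ∑ i, (c i) ^ 2 ≤ ∑ i, l i * (c i) ^ 2 := by
  rw [Finset.mul_sum]
  refine Finset.sum_le_sum fun i _ => ?_
  rcases lt_or_ge i k with h | h
  · simp [hc i h]
  · exact mul_le_mul_of_nonneg_right (hl h) (sq_nonneg _)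

theorem exists_common {n : ℕ} (f g : (Fin n → ℝ) →ₗ[ℝ] (Fin n → ℝ)) (k : Fin n) :
    ∃ x, x ≠ 0 ∧ (∀ i, k < i → f x i = 0) ∧ (∀ i, i < k → g x i = 0) := by
  let F : (Fin n → ℝ) →ₗ[ℝ] ({i : Fin n // i ≠ k} → ℝ) :=
    LinearMap.pi fun i => if k < i.1 then LinearMap.proj i.1 ∘ₗ f else LinearMap.proj i.1 ∘ₗ g
  have hlt : Module.finrank ℝ ({i : Fin n // i ≠ k} → ℝ) < Module.finrank ℝ (Fin n → ℝ) := by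
    rw [Module.finrank_fintype_fun_eq_card, Module.finrank_fintype_fun_eq_card]
    exact Fintype.card_subtype_lt (x := k) (by simp)
  obtain ⟨x, hx, hx0⟩ := (Submodule.ne_bot_iff _).mp (LinearMap.ker_ne_bot_of_finrank_lt (f := F) hlt)
  have hF : ∀ i : {i : Fin n // i ≠ k}, F x i = 0 := fun i => congrFun (LinearMap.mem_ker.mp hx) i
  refine ⟨x, hx0, fun i hi => ?_, fun i hi => ?_⟩
  · simpa [F, hi] using hF ⟨i, hi.ne'⟩
  · simpa [F, hi.not_gt] using hF ⟨i, hi.ne⟩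

/-- **Multiplicative eigenvalue bounds for three matrices** (Theorem 3.4 of Voet et al.).
For `A` symmetric positive semidefinite and `B, C` symmetric positive definite, for every `k`:
`λ_k(A,C)·λ_1(C,B) ≤ λ_k(A,B) ≤ λ_k(A,C)·λ_n(C,B)` and
`λ_1(A,C)·λ_k(C,B) ≤ λ_k(A,B) ≤ λ_n(A,C)·λ_k(C,B)`. -/
theorem genEigs_multiplicative_bounds {n : ℕ} (A B C : Matrix (Fin (n+1)) (Fin (n+1)) ℝ)
    (hA : A.PosSemidef) (hB : B.PosDef) (hC : C.PosDef) :
    ∀ k : Fin (n+1),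
      (genEigs A C k * genEigs C B 0 ≤ genEigs A B k ∧
        genEigs A B k ≤ genEigs A C k * genEigs C B (Fin.last n)) ∧
      (genEigs A C 0 * genEigs C B k ≤ genEigs A B k ∧
        genEigs A B k ≤ genEigs A C (Fin.last n) * genEigs C B k) := by
  intro k
  have pos : ∀ {D : Matrix (Fin (n+1)) (Fin (n+1)) ℝ}, D.PosDef → ∀ x, x ≠ 0 →
      0 < x ⬝ᵥ D *ᵥ x := fun hD x hx => by simpa using hD.dotProduct_mulVec_pos hx
  have psd : ∀ x, 0 ≤ x ⬝ᵥ A *ᵥ x := fun x => by simpa using hA.dotProduct_mulVec_nonneg x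
  obtain ⟨mAB, f, hf⟩ := genEigs_spec hA.isHermitian hB
  obtain ⟨mAC, g, hg⟩ := genEigs_spec hA.isHermitian hC
  obtain ⟨mCB, h, hh⟩ := genEigs_spec hC.isHermitian hB
  have upAB : ∀ k x, (∀ i, k < i → f x i = 0) →
      x ⬝ᵥ A *ᵥ x ≤ genEigs A B k * (x ⬝ᵥ B *ᵥ x) := fun k x hx => by
    rw [(hf x).1, (hf x).2]; exact sum_upper mAB k hx
  have loAB : ∀ k x, (∀ i, i < k → f x i = 0) →
      genEigs A B k * (x ⬝ᵥ B *ᵥ x) ≤ x ⬝ᵥ A *ᵥ x := fun k x hx => by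
    rw [(hf x).1, (hf x).2]; exact sum_lower mAB k hx
  have upAC : ∀ k x, (∀ i, k < i → g x i = 0) →
      x ⬝ᵥ A *ᵥ x ≤ genEigs A C k * (x ⬝ᵥ C *ᵥ x) := fun k x hx => by
    rw [(hg x).1, (hg x).2]; exact sum_upper mAC k hx
  have loAC : ∀ k x, (∀ i, i < k → g x i = 0) →
      genEigs A C k * (x ⬝ᵥ C *ᵥ x) ≤ x ⬝ᵥ A *ᵥ x := fun k x hx => by
    rw [(hg x).1, (hg x).2]; exact sum_lower mAC k hx
  have upCB : ∀ k x, (∀ i, k < i → h x i = 0) →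
      x ⬝ᵥ C *ᵥ x ≤ genEigs C B k * (x ⬝ᵥ B *ᵥ x) := fun k x hx => by
    rw [(hh x).1, (hh x).2]; exact sum_upper mCB k hx
  have loCB : ∀ k x, (∀ i, i < k → h x i = 0) →
      genEigs C B k * (x ⬝ᵥ B *ᵥ x) ≤ x ⬝ᵥ C *ᵥ x := fun k x hx => by
    rw [(hh x).1, (hh x).2]; exact sum_lower mCB k hx
  have nn : ∀ k, 0 ≤ genEigs A C k := fun k => by
    obtain ⟨x, hx0, hx, -⟩ := exists_common g g k
    exact nonneg_of_mul_nonneg_left ((psd x).trans (upAC k x hx)) (pos hC x hx0)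
  have z : ∀ (e : Fin (n+1) → ℝ) (i : Fin (n+1)), i < 0 → e i = 0 :=
    fun e i hi => absurd hi (Fin.not_lt_zero i)
  have l : ∀ (e : Fin (n+1) → ℝ) (i : Fin (n+1)), Fin.last n < i → e i = 0 :=
    fun e i hi => absurd hi (Fin.le_last i).not_gt
  refine ⟨⟨?_, ?_⟩, ?_, ?_⟩
  · obtain ⟨x, hx0, h1, h2⟩ := exists_common f g k
    refine le_of_mul_le_mul_right ?_ (pos hB x hx0)
    have := mul_le_mul_of_nonneg_left (loCB 0 x (z _)) (nn k)
    linarith [upAB k x h1, loAC k x h2]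
  · obtain ⟨x, hx0, h1, h2⟩ := exists_common g f k
    refine le_of_mul_le_mul_right ?_ (pos hB x hx0)
    have := mul_le_mul_of_nonneg_left (upCB (Fin.last n) x (l _)) (nn k)
    linarith [upAC k x h1, loAB k x h2]
  · obtain ⟨x, hx0, h1, h2⟩ := exists_common f h k
    refine le_of_mul_le_mul_right ?_ (pos hB x hx0)
    have := mul_le_mul_of_nonneg_left (loCB k x h2) (nn 0)
    linarith [upAB k x h1, loAC 0 x (z _)]
  · obtain ⟨x, hx0, h1, h2⟩ := exists_common h f k
    refine le_of_mul_le_mul_right ?_ (pos hB x hx0)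
    have := mul_le_mul_of_nonneg_left (upCB k x h1) (nn (Fin.last n))
    linarith [upAC (Fin.last n) x (l _), loAB k x h2]
end

section
/- Local deflation preserving the eigenvalue ordering: let K = Σ_{e=1}^N L_e^T·K_e·L_e with each K_e ∈ ℝ^{m×m} symmetric positive semidefinite, and M = Σ_{e=1}^N L_e^T·M_e·L_e with each M_e ∈ ℝ^{m×m} symmetric positive definite. Fix 0 < r < m and assume λ_{m−r}(K_e, M_e) > 0 for every e. For each e, let U_{e,2} ∈ ℝ^{m×r} be M_e-orthonormal generalized eigenvectors of (K_e, M_e) associated with the r largest generalized eigenvalues λ_{m−r+1}(K_e,M_e),…,λ_m(K_e,M_e) (collected in the diagonal matrix D_{e,2}), set V_e = M_e·U_{e,2} and M̄_e = M_e + V_e·g_e(D_{e,2})·V_e^T with g_e(λ) = λ/λ_{m−r}(K_e,M_e) − 1, and let M̄ = Σ_{e=1}^N L_e^T·M̄_e·L_e. Then for every i = 1,…,n: λ_i(K, M̄) ≤ λ_i(K, M) ≤ C²·λ_i(K, M̄), where C = max_e √(λ_m(K_e,M_e)/λ_{m−r}(K_e,M_e)); equivalently, 1 ≤ ω_i/ω̄_i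 ≤ max_e (ω_{m,e}/ω_{m−r,e}) wherever ω̄_i > 0, with ω_{j,e} = √λ_j(K_e,M_e). -/
open Matrix

/-- The Boolean connectivity matrix `L_e` of an element whose local-to-global map is `σ`:
its rows are the standard basis vectors of `ℝ^n` selected by `σ`. -/
def elemL {ι : Type*} {n : ℕ} (σ : ι → Fin n) : Matrix ι (Fin n) ℝ :=
  Matrix.of fun i j => if σ i = j then 1 else 0

open scoped MatrixOrder in
/-- Simultaneous diagonalization of a symmetric pencil. -/
theorem genEigs_diag {n : ℕ} (A B : Matrix (Fin n) (Fin n) ℝ) (hA : A.IsHermitian)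
    (hB : B.PosDef) : Monotone (genEigs A B) ∧ ∃ U : Matrix (Fin n) (Fin n) ℝ,
      Uᵀ * B * U = 1 ∧ Uᵀ * A * U = Matrix.diagonal (genEigs A B) := by
  have hS0 : 0 ≤ CFC.sqrt B := CFC.sqrt_nonneg B
  have hB0 : 0 ≤ B := hB.posSemidef.nonneg
  have hSS : CFC.sqrt B * CFC.sqrt B = B := CFC.sqrt_mul_sqrt_self B hB0
  have hSu : IsUnit (CFC.sqrt B) := (CFC.isUnit_sqrt_iff B hB0).2 hB.isUnit
  have hSt : (CFC.sqrt B)ᵀ = CFC.sqrt B := by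
    have := hS0.posSemidef.1
    rwa [Matrix.IsHermitian, conjTranspose_eq_transpose_of_trivial] at this
  have hgen : genEigs A B = sortedEigs ((CFC.sqrt B)⁻¹ * A * (CFC.sqrt B)⁻¹) := by
    unfold genEigs
    rw [dif_pos hB]
  rw [hgen]
  clear hgen
  generalize CFC.sqrt B = S at *
  have hdet : IsUnit S.det := (Matrix.isUnit_iff_isUnit_det _).1 hSu
  have hSit : (S⁻¹)ᵀ = S⁻¹ := by rw [transpose_nonsing_inv, hSt]
  have hAt : Aᵀ = A := by
    rwa [Matrix.IsHermitian, conjTranspose_eq_transpose_of_trivial] at hA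
  have hT : (S⁻¹ * A * S⁻¹).IsHermitian := by
    rw [Matrix.IsHermitian, conjTranspose_eq_transpose_of_trivial, transpose_mul, transpose_mul,
      hSit, hAt, mul_assoc]
  generalize hTd : S⁻¹ * A * S⁻¹ = T at *
  have hs : sortedEigs T = hT.eigenvalues ∘ Tuple.sort hT.eigenvalues := by
    unfold sortedEigs
    rw [dif_pos hT]
  rw [hs]
  refine ⟨Tuple.monotone_sort _, ?_⟩
  set p := Tuple.sort hT.eigenvalues
  set Q : Matrix (Fin n) (Fin n) ℝ := (hT.eigenvectorUnitary : Matrix (Fin n) (Fin n) ℝ) with hQ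
  have hQQ : Qᵀ * Q = 1 := by
    have := Unitary.coe_star_mul_self hT.eigenvectorUnitary
    rwa [star_eq_conjTranspose, conjTranspose_eq_transpose_of_trivial] at this
  have hQT : Qᵀ * T * Q = Matrix.diagonal hT.eigenvalues := by
    have h := hT.spectral_theorem
    rw [Unitary.conjStarAlgAut_apply, ← Unitary.coe_star, Unitary.coe_star, star_eq_conjTranspose,
      conjTranspose_eq_transpose_of_trivial, ← hQ] at h
    have h2 : (RCLike.ofReal ∘ hT.eigenvalues : Fin n → ℝ) = hT.eigenvalues := by
      ext i; simp
    rw [h2] at h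
    calc Qᵀ * T * Q = Qᵀ * (Q * Matrix.diagonal hT.eigenvalues * Qᵀ) * Q := by rw [← h]
      _ = (Qᵀ * Q) * Matrix.diagonal hT.eigenvalues * (Qᵀ * Q) := by simp only [mul_assoc]
      _ = _ := by rw [hQQ, one_mul, mul_one]
  refine ⟨(S⁻¹ * Q).submatrix id p, ?_, ?_⟩
  · have h1 : (S⁻¹ * Q)ᵀ * B * (S⁻¹ * Q) = 1 := by
      rw [transpose_mul, hSit, ← hSS]
      calc Qᵀ * S⁻¹ * (S * S) * (S⁻¹ * Q) = Qᵀ * (S⁻¹ * S) * (S * S⁻¹) * Q := by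
            simp only [mul_assoc]
        _ = 1 := by rw [nonsing_inv_mul _ hdet, mul_nonsing_inv _ hdet, mul_one, mul_one, hQQ]
    have h2 : ((S⁻¹ * Q).submatrix id p)ᵀ * B * (S⁻¹ * Q).submatrix id p
        = ((S⁻¹ * Q)ᵀ * B * (S⁻¹ * Q)).submatrix p p := by
      ext i j; simp [Matrix.mul_apply]
    rw [h2, h1, submatrix_one_equiv]
  · have h1 : (S⁻¹ * Q)ᵀ * A * (S⁻¹ * Q) = Matrix.diagonal hT.eigenvalues := by
      rw [transpose_mul, hSit, ← hQT, ← hTd]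
      simp only [mul_assoc]
    have h2 : ((S⁻¹ * Q).submatrix id p)ᵀ * A * (S⁻¹ * Q).submatrix id p
        = ((S⁻¹ * Q)ᵀ * A * (S⁻¹ * Q)).submatrix p p := by
      ext i j; simp [Matrix.mul_apply]
    rw [h2, h1, submatrix_diagonal_equiv]

theorem quad_congr {m n : Type*} [Fintype m] [Fintype n] (A : Matrix m m ℝ)
    (U : Matrix m n ℝ) (y : n → ℝ) :
    (U *ᵥ y) ⬝ᵥ (A *ᵥ (U *ᵥ y)) = y ⬝ᵥ ((Uᵀ * A * U) *ᵥ y) := by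
  rw [← mulVec_mulVec, ← mulVec_mulVec, dotProduct_mulVec y, vecMul_transpose]

theorem quad_diag {n : Type*} [Fintype n] [DecidableEq n] (d y : n → ℝ) :
    y ⬝ᵥ (Matrix.diagonal d *ᵥ y) = ∑ j, d j * y j ^ 2 := by
  simp only [dotProduct, mulVec_diagonal]
  exact Finset.sum_congr rfl fun j _ => by ring

theorem genEigs_nonneg {n : ℕ} (A B : Matrix (Fin n) (Fin n) ℝ) (hA : A.PosSemidef)
    (hB : B.PosDef) (i : Fin n) : 0 ≤ genEigs A B i := by
  obtain ⟨-, U, -, h⟩ := genEigs_diag A B hA.1 hB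
  have h1 := hA.dotProduct_mulVec_nonneg (U *ᵥ Pi.single i 1)
  rw [star_trivial, quad_congr, h] at h1
  simpa using h1

/-- Comparison of generalized eigenvalues. -/
theorem genEigs_le {n : ℕ} (A B B' : Matrix (Fin n) (Fin n) ℝ) (hA : A.PosSemidef)
    (hB : B.PosDef) (hB' : B'.PosDef) (c : ℝ)
    (h : ∀ x, x ⬝ᵥ (B' *ᵥ x) ≤ c * (x ⬝ᵥ (B *ᵥ x))) (i : Fin n) :
    genEigs A B i ≤ c * genEigs A B' i := by
  obtain ⟨hmono, U, hUB, hUA⟩ := genEigs_diag A B hA.1 hB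
  obtain ⟨hmono', U', hUB', hUA'⟩ := genEigs_diag A B' hA.1 hB'
  have hl' := genEigs_nonneg A B' hA hB' i
  have hinv : U * (Uᵀ * B) = 1 := mul_eq_one_comm.1 hUB
  let P : Matrix (Fin n) (Fin n) ℝ := (Uᵀ * B) * U'
  have hP : U * P = U' := by
    show U * ((Uᵀ * B) * U') = U'
    rw [← mul_assoc, hinv, one_mul]
  let f : (Fin n → ℝ) →ₗ[ℝ] ({j : Fin n // j ≠ i} → ℝ) :=
    { toFun := fun z j => if j.1 < i then (P *ᵥ z) j.1 else z j.1
      map_add' := by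
        intro a b; ext j
        simp only [mulVec_add, Pi.add_apply]
        split_ifs <;> rfl
      map_smul' := by
        intro a b; ext j
        simp only [mulVec_smul, Pi.smul_apply, RingHom.id_apply]
        split_ifs <;> rfl }
  have hker : LinearMap.ker f ≠ ⊥ := by
    apply LinearMap.ker_ne_bot_of_finrank_lt
    rw [Module.finrank_fintype_fun_eq_card, Module.finrank_fintype_fun_eq_card]
    exact Fintype.card_subtype_lt (x := i) (by simp)
  obtain ⟨z, hz, hz0⟩ := (Submodule.ne_bot_iff _).1 hker
  have hzj : ∀ j : Fin n, i < j → z j = 0 := by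
    intro j hj
    have := congrFun (LinearMap.mem_ker.1 hz) ⟨j, hj.ne'⟩
    simpa [f, not_lt.2 hj.le] using this
  set y := P *ᵥ z with hy
  have hyj : ∀ j : Fin n, j < i → y j = 0 := by
    intro j hj
    have := congrFun (LinearMap.mem_ker.1 hz) ⟨j, hj.ne⟩
    simpa [f, hj] using this
  have hx : U *ᵥ y = U' *ᵥ z := by rw [hy, mulVec_mulVec, hP]
  set x := U' *ᵥ z with hxd
  have hx0 : x ≠ 0 := by
    intro h0
    apply hz0
    have : (U'ᵀ * B') *ᵥ x = z := by rw [hxd, mulVec_mulVec, hUB', one_mulVec]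
    rw [← this, h0, mulVec_zero]
  have hpos : 0 < x ⬝ᵥ (B *ᵥ x) := by
    simpa using hB.dotProduct_mulVec_pos hx0
  have e1 : x ⬝ᵥ (B *ᵥ x) = ∑ j, y j ^ 2 := by
    rw [← hx, quad_congr, hUB, ← diagonal_one, quad_diag]; simp
  have e2 : x ⬝ᵥ (A *ᵥ x) = ∑ j, genEigs A B j * y j ^ 2 := by
    rw [← hx, quad_congr, hUA, quad_diag]
  have e3 : x ⬝ᵥ (B' *ᵥ x) = ∑ j, z j ^ 2 := by
    rw [hxd, quad_congr, hUB', ← diagonal_one, quad_diag]; simp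
  have e4 : x ⬝ᵥ (A *ᵥ x) = ∑ j, genEigs A B' j * z j ^ 2 := by
    rw [hxd, quad_congr, hUA', quad_diag]
  have i1 : genEigs A B i * (x ⬝ᵥ (B *ᵥ x)) ≤ x ⬝ᵥ (A *ᵥ x) := by
    rw [e1, e2, Finset.mul_sum]
    apply Finset.sum_le_sum
    intro j _
    rcases lt_or_ge j i with hj | hj
    · simp [hyj j hj]
    · exact mul_le_mul_of_nonneg_right (hmono hj) (sq_nonneg _)
  have i2 : x ⬝ᵥ (A *ᵥ x) ≤ genEigs A B' i * (x ⬝ᵥ (B' *ᵥ x)) := by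
    rw [e3, e4, Finset.mul_sum]
    apply Finset.sum_le_sum
    intro j _
    rcases lt_or_ge i j with hj | hj
    · simp [hzj j hj]
    · exact mul_le_mul_of_nonneg_right (hmono' hj) (sq_nonneg _)
  have i3 := mul_le_mul_of_nonneg_left (h x) hl'
  refine le_of_mul_le_mul_right ?_ hpos
  linarith

/-- Bessel-type bounds for a deflated mass matrix. -/
theorem deflate_bounds {m r : ℕ} (M : Matrix (Fin m) (Fin m) ℝ) (hM : M.PosDef)
    (U : Matrix (Fin m) (Fin r) ℝ) (hU : Uᵀ * M * U = 1) (g : Fin r → ℝ) (c : ℝ)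
    (hg0 : ∀ j, 0 ≤ g j) (hgc : ∀ j, g j ≤ c - 1) (hc : 1 ≤ c) (x : Fin m → ℝ) :
    x ⬝ᵥ (M *ᵥ x) ≤ x ⬝ᵥ ((M + (M * U) * Matrix.diagonal g * (M * U)ᵀ) *ᵥ x) ∧
    x ⬝ᵥ ((M + (M * U) * Matrix.diagonal g * (M * U)ᵀ) *ᵥ x) ≤ c * (x ⬝ᵥ (M *ᵥ x)) := by
  have hMt : Mᵀ = M := by
    have := hM.1
    rwa [Matrix.IsHermitian, conjTranspose_eq_transpose_of_trivial] at this
  set y := (M * U)ᵀ *ᵥ x with hy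
  have e1 : x ⬝ᵥ ((M + (M * U) * Matrix.diagonal g * (M * U)ᵀ) *ᵥ x)
      = x ⬝ᵥ (M *ᵥ x) + ∑ j, g j * y j ^ 2 := by
    have := quad_congr (Matrix.diagonal g) (M * U)ᵀ x
    rw [transpose_transpose, ← hy, quad_diag] at this
    rw [add_mulVec, dotProduct_add, this]
  have e2 : ∑ j, y j ^ 2 ≤ x ⬝ᵥ (M *ᵥ x) := by
    have h0 : 0 ≤ (x - U *ᵥ y) ⬝ᵥ (M *ᵥ (x - U *ᵥ y)) := by
      simpa using hM.posSemidef.dotProduct_mulVec_nonneg (x - U *ᵥ y)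
    have hyy : y ⬝ᵥ y = ∑ j, y j ^ 2 := by
      simp only [dotProduct, sq]
    have a1 : (U *ᵥ y) ⬝ᵥ (M *ᵥ (U *ᵥ y)) = y ⬝ᵥ y := by
      rw [quad_congr, hU, one_mulVec]
    have a2 : (U *ᵥ y) ⬝ᵥ (M *ᵥ x) = y ⬝ᵥ y := by
      nth_rw 3 [hy]
      rw [transpose_mul, hMt, ← mulVec_mulVec, dotProduct_mulVec y, vecMul_transpose]
    have a3 : x ⬝ᵥ (M *ᵥ (U *ᵥ y)) = y ⬝ᵥ y := by
      rw [← a2, dotProduct_mulVec x, ← mulVec_transpose, hMt, dotProduct_comm]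
    rw [mulVec_sub, dotProduct_sub, sub_dotProduct, sub_dotProduct, a1, a2, a3] at h0
    linarith
  have e3 : 0 ≤ ∑ j, g j * y j ^ 2 :=
    Finset.sum_nonneg fun j _ => mul_nonneg (hg0 j) (sq_nonneg _)
  have e4 : ∑ j, g j * y j ^ 2 ≤ (c - 1) * ∑ j, y j ^ 2 := by
    rw [Finset.mul_sum]
    exact Finset.sum_le_sum fun j _ => mul_le_mul_of_nonneg_right (hgc j) (sq_nonneg _)
  have e5 := mul_le_mul_of_nonneg_left e2 (sub_nonneg.2 hc)
  rw [e1]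
  constructor <;> linarith

theorem quad_assemble {N m n : ℕ} (σ : Fin N → Fin m → Fin n)
    (Ae : Fin N → Matrix (Fin m) (Fin m) ℝ) (x : Fin n → ℝ) :
    x ⬝ᵥ ((∑ e, (elemL (σ e))ᵀ * Ae e * elemL (σ e)) *ᵥ x)
      = ∑ e, (elemL (σ e) *ᵥ x) ⬝ᵥ (Ae e *ᵥ (elemL (σ e) *ᵥ x)) := by
  simp only [quad_congr]
  rw [sum_mulVec, dotProduct_sum]

theorem herm_assemble {N m n : ℕ} (σ : Fin N → Fin m → Fin n)
    (Ae : Fin N → Matrix (Fin m) (Fin m) ℝ) (h : ∀ e, (Ae e).IsHermitian) :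
    (∑ e, (elemL (σ e))ᵀ * Ae e * elemL (σ e)).IsHermitian := by
  rw [Matrix.IsHermitian, conjTranspose_sum]
  refine Finset.sum_congr rfl fun e _ => ?_
  have := h e
  rw [Matrix.IsHermitian, conjTranspose_eq_transpose_of_trivial] at this
  rw [conjTranspose_eq_transpose_of_trivial, transpose_mul, transpose_mul, transpose_transpose,
    this, Matrix.mul_assoc]

theorem psd_assemble {N m n : ℕ} (σ : Fin N → Fin m → Fin n)
    (Ae : Fin N → Matrix (Fin m) (Fin m) ℝ) (h : ∀ e, (Ae e).PosSemidef) :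
    (∑ e, (elemL (σ e))ᵀ * Ae e * elemL (σ e)).PosSemidef := by
  refine .of_dotProduct_mulVec_nonneg (herm_assemble σ Ae fun e => (h e).1) fun x => ?_
  rw [star_trivial, quad_assemble]
  exact Finset.sum_nonneg fun e _ => by
    simpa using (h e).dotProduct_mulVec_nonneg (elemL (σ e) *ᵥ x)

theorem pd_assemble {N m n : ℕ} (σ : Fin N → Fin m → Fin n)
    (hcover : ∀ i : Fin n, ∃ e j, σ e j = i)
    (Ae : Fin N → Matrix (Fin m) (Fin m) ℝ) (h : ∀ e, (Ae e).PosDef) :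
    (∑ e, (elemL (σ e))ᵀ * Ae e * elemL (σ e)).PosDef := by
  refine .of_dotProduct_mulVec_pos (herm_assemble σ Ae fun e => (h e).1) fun x hx => ?_
  rw [star_trivial, quad_assemble]
  obtain ⟨i, hi⟩ := Function.ne_iff.1 hx
  obtain ⟨e, j, hej⟩ := hcover i
  refine Finset.sum_pos' (fun e _ => ?_) ⟨e, Finset.mem_univ _, ?_⟩
  · simpa using (h e).posSemidef.dotProduct_mulVec_nonneg (elemL (σ e) *ᵥ x)
  · have : elemL (σ e) *ᵥ x ≠ 0 := by
      intro h0
      apply hi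
      have := congrFun h0 j
      simpa [elemL, mulVec, dotProduct, hej] using this
    simpa using (h e).dotProduct_mulVec_pos this

/-- **Local deflation preserving the eigenvalue ordering** (Corollary for strategy 2).
Let `K = Σ_e L_eᵀ·K_e·L_e` with `K_e ⪰ 0` symmetric and `M = Σ_e L_eᵀ·M_e·L_e` with `M_e ≻ 0`
symmetric. Fix `0 < r < m` and assume `λ_{m−r}(K_e,M_e) > 0` for all `e`. For each `e`, let
`U_{e,2}` collect `M_e`-orthonormal generalized eigenvectors of `(K_e,M_e)` for the `r`
largest generalized eigenvalues, set `V_e = M_e·U_{e,2}`,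
`M̄_e = M_e + V_e·g_e(D_{e,2})·V_eᵀ` with `g_e(λ) = λ/λ_{m−r}(K_e,M_e) − 1`, and
`M̄ = Σ_e L_eᵀ·M̄_e·L_e`. Then for every `i`:
`λ_i(K,M̄) ≤ λ_i(K,M) ≤ C²·λ_i(K,M̄)` with
`C = max_e √(λ_m(K_e,M_e)/λ_{m−r}(K_e,M_e))`; equivalently
`1 ≤ ω_i/ω̄_i ≤ max_e (ω_{m,e}/ω_{m−r,e})` wherever `ω̄_i > 0`. -/
theorem local_deflation_ordered_bounds {N m n pmax r : ℕ} (hpmax : 0 < pmax)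
    (hr : 0 < r) (hrm : r < m + 1)
    (σ : Fin (N+1) → Fin (m+1) → Fin (n+1))
    (hinj : ∀ e, Function.Injective (σ e))
    (hcover : ∀ i : Fin (n+1), ∃ e j, σ e j = i)
    (hp : ∀ i : Fin (n+1), (Finset.univ.filter fun e => ∃ j, σ e j = i).card ≤ pmax)
    (Ke Me : Fin (N+1) → Matrix (Fin (m+1)) (Fin (m+1)) ℝ)
    (hKe : ∀ e, (Ke e).PosSemidef) (hMe : ∀ e, (Me e).PosDef)
    (hpos : ∀ e, 0 < genEigs (Ke e) (Me e) ⟨m - r, by omega⟩)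
    (emb : Fin r → Fin (m+1)) (hemb : ∀ j : Fin r, (emb j : ℕ) = m + 1 - r + (j : ℕ))
    (U2 : Fin (N+1) → Matrix (Fin (m+1)) (Fin r) ℝ)
    (hU2 : ∀ e, (U2 e)ᵀ * Me e * U2 e = 1)
    (hU2eig : ∀ e, ∀ j : Fin r,
      Ke e *ᵥ (fun i => U2 e i j) =
        genEigs (Ke e) (Me e) (emb j) • (Me e *ᵥ fun i => U2 e i j))
    (Ve : Fin (N+1) → Matrix (Fin (m+1)) (Fin r) ℝ)
    (hVe : ∀ e, Ve e = Me e * U2 e)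
    (Mbare : Fin (N+1) → Matrix (Fin (m+1)) (Fin (m+1)) ℝ)
    (hMbare : ∀ e, Mbare e = Me e +
      Ve e * Matrix.diagonal (fun j =>
        genEigs (Ke e) (Me e) (emb j) / genEigs (Ke e) (Me e) ⟨m - r, by omega⟩ - 1) *
        (Ve e)ᵀ)
    (K M Mbar : Matrix (Fin (n+1)) (Fin (n+1)) ℝ)
    (hK : K = ∑ e, (elemL (σ e))ᵀ * Ke e * elemL (σ e))
    (hM : M = ∑ e, (elemL (σ e))ᵀ * Me e * elemL (σ e))
    (hMbar : Mbar = ∑ e, (elemL (σ e))ᵀ * Mbare e * elemL (σ e)) :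
    ∀ i : Fin (n+1),
      (genEigs K Mbar i ≤ genEigs K M i ∧
        genEigs K M i ≤
          (Finset.univ.sup' Finset.univ_nonempty fun e =>
            Real.sqrt (genEigs (Ke e) (Me e) (Fin.last m) /
              genEigs (Ke e) (Me e) ⟨m - r, by omega⟩)) ^ 2 * genEigs K Mbar i) ∧
      (0 < genEigs K Mbar i →
        1 ≤ Real.sqrt (genEigs K M i) / Real.sqrt (genEigs K Mbar i) ∧
        Real.sqrt (genEigs K M i) / Real.sqrt (genEigs K Mbar i) ≤
          Finset.univ.sup' Finset.univ_nonempty fun e =>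
            Real.sqrt (genEigs (Ke e) (Me e) (Fin.last m)) /
              Real.sqrt (genEigs (Ke e) (Me e) ⟨m - r, by omega⟩)) := by
  set lo : Fin (N+1) → ℝ := fun e => genEigs (Ke e) (Me e) ⟨m - r, by omega⟩ with hlo
  set hi : Fin (N+1) → ℝ := fun e => genEigs (Ke e) (Me e) (Fin.last m) with hhi
  set C := Finset.univ.sup' Finset.univ_nonempty fun e => Real.sqrt (hi e / lo e) with hC
  have hpos' : ∀ e, 0 < lo e := hpos
  have hmono := fun e => (genEigs_diag (Ke e) (Me e) (hKe e).1 (hMe e)).1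
  have hlohi : ∀ e, lo e ≤ hi e := fun e => hmono e (Fin.le_last _)
  have hCe : ∀ e, Real.sqrt (hi e / lo e) ≤ C := fun e =>
    Finset.le_sup' (fun e => Real.sqrt (hi e / lo e)) (Finset.mem_univ e)
  have hC0 : 0 ≤ C := (Real.sqrt_nonneg _).trans (hCe 0)
  have hratio : ∀ e, hi e / lo e ≤ C ^ 2 := by
    intro e
    rw [← Real.sq_sqrt (div_nonneg ((hpos' e).le.trans (hlohi e)) (hpos' e).le)]
    exact pow_le_pow_left₀ (Real.sqrt_nonneg _) (hCe e) 2
  have hone : ∀ e, 1 ≤ hi e / lo e := fun e => (one_le_div (hpos' e)).2 (hlohi e)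
  have hlocal := fun e => deflate_bounds (Me e) (hMe e) (U2 e) (hU2 e)
    (fun j => genEigs (Ke e) (Me e) (emb j) / lo e - 1) (C ^ 2)
    (by
      intro j
      rw [sub_nonneg, one_le_div (hpos' e)]
      refine hmono e ?_
      rw [Fin.le_def, hemb]
      show m - r ≤ _
      omega)
    (by
      intro j
      refine sub_le_sub_right (le_trans ?_ (hratio e)) 1
      exact div_le_div_of_nonneg_right (hmono e (Fin.le_last _)) (hpos' e).le)
    ((hone e).trans (hratio e))
  have hMb : ∀ e, Mbare e = Me e + (Me e * U2 e) * Matrix.diagonal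
      (fun j => genEigs (Ke e) (Me e) (emb j) / lo e - 1) * (Me e * U2 e)ᵀ := by
    intro e
    rw [hMbare e, hVe e]
  simp only [← hMb] at hlocal
  have hMbpd : ∀ e, (Mbare e).PosDef := by
    intro e
    refine .of_dotProduct_mulVec_pos ?_ fun x hx => ?_
    · rw [hMb e]
      refine (hMe e).1.add ?_
      generalize Me e * U2 e = W
      rw [Matrix.IsHermitian, conjTranspose_eq_transpose_of_trivial, transpose_mul,
        transpose_mul, transpose_transpose, diagonal_transpose, Matrix.mul_assoc]
    · rw [star_trivial]
      refine lt_of_lt_of_le ?_ (hlocal e x).1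
      simpa using (hMe e).dotProduct_mulVec_pos hx
  have hKp : K.PosSemidef := hK ▸ psd_assemble σ Ke hKe
  have hMp : M.PosDef := hM ▸ pd_assemble σ hcover Me hMe
  have hMbarp : Mbar.PosDef := hMbar ▸ pd_assemble σ hcover Mbare hMbpd
  intro i
  have h1 : genEigs K Mbar i ≤ genEigs K M i := by
    have := genEigs_le K Mbar M hKp hMbarp hMp 1 (fun x => by
      rw [one_mul, hM, hMbar, quad_assemble, quad_assemble]
      exact Finset.sum_le_sum fun e _ => (hlocal e _).1) i
    rwa [one_mul] at this
  have h2 : genEigs K M i ≤ C ^ 2 * genEigs K Mbar i :=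
    genEigs_le K M Mbar hKp hMp hMbarp (C ^ 2) (fun x => by
      rw [hM, hMbar, quad_assemble, quad_assemble, Finset.mul_sum]
      exact Finset.sum_le_sum fun e _ => (hlocal e _).2) i
  refine ⟨⟨h1, h2⟩, fun hp0 => ?_⟩
  have hs : 0 < Real.sqrt (genEigs K Mbar i) := Real.sqrt_pos.2 hp0
  refine ⟨(one_le_div hs).2 (Real.sqrt_le_sqrt h1), ?_⟩
  have hCC : (Finset.univ.sup' Finset.univ_nonempty fun e => Real.sqrt (hi e) / Real.sqrt (lo e))
      = C := by
    rw [hC]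
    congr 1
    ext e
    rw [Real.sqrt_div' _ (hpos' e).le]
  refine le_of_le_of_eq ?_ hCC.symm
  rw [div_le_iff₀ hs]
  calc Real.sqrt (genEigs K M i) ≤ Real.sqrt (C ^ 2 * genEigs K Mbar i) := Real.sqrt_le_sqrt h2
    _ = C * Real.sqrt (genEigs K Mbar i) := by
      rw [Real.sqrt_mul (sq_nonneg C), Real.sqrt_sq hC0]
end
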